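/- For every γ with 0 < γ < 1 and every k ∈ ℕ with k ≥ 1, there exists a constant c > 0 depending only on γ and k (in particular independent of n) such that for every n ∈ ℕ, every f : C_n → ℝ whose Fourier coefficients satisfy f̂(∅) = 0 and f̂(S) = 0 whenever |S| > k, and every t ≥ 0, one has ‖e^{tΔ_γ} f‖₁ ≤ e^{−c t} ‖f‖₁. -/

import Mathlib

open Finset MeasureTheory Real

noncomputable section

/-- Expectation on the Hamming cube `{-1,1}^n`, modeled as `Fin n → Bool`
(`true ↔ 1`, `false ↔ -1`), with the uniform probability measure. -/
def cubeE {n : ℕ} (f : (Fin n → Bool) → ℝ) : ℝ :=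
  (∑ x : Fin n → Bool, f x) / 2 ^ n

/-- The Walsh monomial `x^S = ∏_{i ∈ S} x_i`. -/
def walsh {n : ℕ} (S : Finset (Fin n)) (x : Fin n → Bool) : ℝ :=
  ∏ i ∈ S, (if x i then (1 : ℝ) else -1)

/-- Fourier coefficient `f̂(S) = E (f · x^S)`. -/
def cubeFourier {n : ℕ} (f : (Fin n → Bool) → ℝ) (S : Finset (Fin n)) : ℝ :=
  cubeE fun x => f x * walsh S x

/-- The heat semigroup `e^{tΔ} f = Σ_S e^{-t|S|} f̂(S) x^S`. -/
def heat1 {n : ℕ} (t : ℝ) (f : (Fin n → Bool) → ℝ) : (Fin n → Bool) → ℝ :=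
  fun x => ∑ S : Finset (Fin n), Real.exp (-t * (S.card : ℝ)) * cubeFourier f S * walsh S x

/-- The fractional heat semigroup `e^{tΔ_γ} f = Σ_S e^{-t|S|^γ} f̂(S) x^S`. -/
def heatFrac {n : ℕ} (γ t : ℝ) (f : (Fin n → Bool) → ℝ) : (Fin n → Bool) → ℝ :=
  fun x => ∑ S : Finset (Fin n), Real.exp (-t * (S.card : ℝ) ^ γ) * cubeFourier f S * walsh S x

/-- The Laplacian `Δf = -Σ_S |S| f̂(S) x^S`. -/
def lap {n : ℕ} (f : (Fin n → Bool) → ℝ) : (Fin n → Bool) → ℝ :=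
  fun x => -∑ S : Finset (Fin n), (S.card : ℝ) * cubeFourier f S * walsh S x

/-- The fractional Laplacian `Δ_γ f = -Σ_S |S|^γ f̂(S) x^S`. -/
def fracLap {n : ℕ} (γ : ℝ) (f : (Fin n → Bool) → ℝ) : (Fin n → Bool) → ℝ :=
  fun x => -∑ S : Finset (Fin n), (S.card : ℝ) ^ γ * cubeFourier f S * walsh S x

/-- The discrete partial derivative `∇_j f`. -/
def cubeGrad {n : ℕ} (j : Fin n) (f : (Fin n → Bool) → ℝ) (x : Fin n → Bool) : ℝ :=
  (f (Function.update x j true) - f (Function.update x j false)) / 2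

/-- The squared length of the discrete gradient, `|∇f|²(x) = Σ_j |∇_j f(x)|²`. -/
def gradSq {n : ℕ} (f : (Fin n → Bool) → ℝ) (x : Fin n → Bool) : ℝ :=
  ∑ j : Fin n, (cubeGrad j f x) ^ 2

/-- The `L^p` norm `‖f‖_p = (E|f|^p)^{1/p}` on the Hamming cube. -/
def pNorm {n : ℕ} (p : ℝ) (f : (Fin n → Bool) → ℝ) : ℝ :=
  (cubeE fun x => |f x| ^ p) ^ (1 / p)

def sg (b : Bool) : ℝ := if b then 1 else -1

lemma walsh_eq {n : ℕ} (S : Finset (Fin n)) (x : Fin n → Bool) :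
    walsh S x = ∏ i, if i ∈ S then sg (x i) else 1 := by
  simp [walsh, sg, Finset.prod_ite_mem]

lemma walsh_kernel {n : ℕ} (x y : Fin n → Bool) :
    ∑ S : Finset (Fin n), walsh S y * walsh S x = if y = x then (2:ℝ) ^ n else 0 := by
  have h : ∀ S : Finset (Fin n), walsh S y * walsh S x = ∏ i ∈ S, (sg (y i) * sg (x i)) := by
    intro S; rw [Finset.prod_mul_distrib]; rfl
  simp_rw [h]
  have := (Finset.prod_one_add (f := fun i => sg (y i) * sg (x i)) (Finset.univ : Finset (Fin n)))
  rw [Finset.powerset_univ] at this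
  rw [← this]
  split_ifs with hxy
  · subst hxy
    have : ∀ i, 1 + sg (y i) * sg (y i) = 2 := by
      intro i; unfold sg; split_ifs <;> norm_num
    simp [this]
  · obtain ⟨i, hi⟩ := Function.ne_iff.mp hxy
    apply Finset.prod_eq_zero (Finset.mem_univ i)
    revert hi
    cases y i <;> cases x i <;> simp [sg]

lemma walsh_orth {n : ℕ} (S T : Finset (Fin n)) :
    cubeE (fun x => walsh S x * walsh T x) = if S = T then 1 else 0 := by
  have h : ∀ x : Fin n → Bool, walsh S x * walsh T x =
      ∏ i, ((if i ∈ S then sg (x i) else 1) * (if i ∈ T then sg (x i) else 1)) := by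
    intro x; rw [walsh_eq, walsh_eq, Finset.prod_mul_distrib]
  unfold cubeE
  simp_rw [h]
  have := Finset.prod_univ_sum (fun _ : Fin n => (Finset.univ : Finset Bool))
    (fun i b => ((if i ∈ S then sg b else 1) * (if i ∈ T then sg b else (1:ℝ))))
  rw [Fintype.piFinset_univ] at this
  rw [← this]
  split_ifs with hST
  · subst hST
    have : ∀ i, ∑ b : Bool, ((if i ∈ S then sg b else 1) * (if i ∈ S then sg b else (1:ℝ))) = 2 := by
      intro i; by_cases hi : i ∈ S <;> simp [hi, sg] <;> norm_num
    rw [Finset.prod_congr rfl fun i _ => this i]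
    simp
  · have : ∃ i, ¬ (i ∈ S ↔ i ∈ T) := by
      by_contra! hh
      exact hST (Finset.ext hh)
    obtain ⟨i, hi⟩ := this
    rw [Finset.prod_eq_zero (Finset.mem_univ i), zero_div]
    by_cases h1 : i ∈ S <;> by_cases h2 : i ∈ T <;> simp_all [sg]

lemma cubeE_sum {n : ℕ} {ι : Type*} (s : Finset ι) (F : ι → (Fin n → Bool) → ℝ) :
    cubeE (fun x => ∑ i ∈ s, F i x) = ∑ i ∈ s, cubeE (F i) := by
  unfold cubeE
  rw [Finset.sum_comm, Finset.sum_div]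

lemma cubeE_mul {n : ℕ} (a : ℝ) (F : (Fin n → Bool) → ℝ) :
    cubeE (fun x => a * F x) = a * cubeE F := by
  unfold cubeE
  rw [← Finset.mul_sum, mul_div_assoc]

lemma cubeE_add {n : ℕ} (F G : (Fin n → Bool) → ℝ) :
    cubeE (fun x => F x + G x) = cubeE F + cubeE G := by
  unfold cubeE
  rw [Finset.sum_add_distrib, add_div]

lemma cubeE_sub {n : ℕ} (F G : (Fin n → Bool) → ℝ) :
    cubeE (fun x => F x - G x) = cubeE F - cubeE G := by
  unfold cubeE
  rw [Finset.sum_sub_distrib, sub_div]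

lemma cubeE_mono {n : ℕ} {F G : (Fin n → Bool) → ℝ} (h : ∀ x, F x ≤ G x) :
    cubeE F ≤ cubeE G := by
  unfold cubeE
  gcongr
  exact h _

/-- L1 norm. -/
def N1 {n : ℕ} (f : (Fin n → Bool) → ℝ) : ℝ := cubeE fun x => |f x|

lemma pNorm_one {n : ℕ} (f : (Fin n → Bool) → ℝ) : pNorm 1 f = N1 f := by
  simp [pNorm, N1]

lemma N1_nonneg {n : ℕ} (f : (Fin n → Bool) → ℝ) : 0 ≤ N1 f := by
  unfold N1 cubeE; positivity

lemma N1_smul {n : ℕ} (a : ℝ) (f : (Fin n → Bool) → ℝ) :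
    N1 (fun x => a * f x) = |a| * N1 f := by
  simp [N1, abs_mul, cubeE_mul]

lemma N1_sub_le {n : ℕ} (f g : (Fin n → Bool) → ℝ) :
    N1 (fun x => f x - g x) ≤ N1 f + N1 g := by
  unfold N1
  rw [← cubeE_add]
  exact cubeE_mono fun x => abs_sub _ _

lemma N1_sum_le {n : ℕ} {ι : Type*} (s : Finset ι) (F : ι → (Fin n → Bool) → ℝ) :
    N1 (fun x => ∑ i ∈ s, F i x) ≤ ∑ i ∈ s, N1 (F i) := by
  unfold N1
  rw [← cubeE_sum]
  exact cubeE_mono fun x => Finset.abs_sum_le_sum_abs _ _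

/-- Radial Fourier multiplier. -/
def mult {n : ℕ} (φ : ℕ → ℝ) (f : (Fin n → Bool) → ℝ) : (Fin n → Bool) → ℝ :=
  fun x => ∑ S : Finset (Fin n), φ S.card * cubeFourier f S * walsh S x

lemma mult_one {n : ℕ} (f : (Fin n → Bool) → ℝ) : mult (fun _ => 1) f = f := by
  funext x
  unfold mult cubeFourier cubeE
  have : ∀ S : Finset (Fin n), 1 * ((∑ y, f y * walsh S y) / 2 ^ n) * walsh S x
      = ∑ y, f y / 2 ^ n * (walsh S y * walsh S x) := by
    intro S
    rw [one_mul, Finset.sum_div, Finset.sum_mul]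
    refine Finset.sum_congr rfl fun y _ => by ring
  simp_rw [this]
  rw [Finset.sum_comm]
  simp_rw [← Finset.mul_sum, walsh_kernel]
  simp

lemma fourier_mult {n : ℕ} (φ : ℕ → ℝ) (f : (Fin n → Bool) → ℝ) (S : Finset (Fin n)) :
    cubeFourier (mult φ f) S = φ S.card * cubeFourier f S := by
  conv_lhs => unfold cubeFourier mult
  simp_rw [Finset.sum_mul, mul_assoc]
  rw [cubeE_sum]
  simp_rw [cubeE_mul, walsh_orth]
  simp

lemma mult_mult {n : ℕ} (φ ψ : ℕ → ℝ) (f : (Fin n → Bool) → ℝ) :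
    mult φ (mult ψ f) = mult (fun m => φ m * ψ m) f := by
  funext x
  change ∑ S : Finset (Fin n), φ S.card * cubeFourier (mult ψ f) S * walsh S x =
    ∑ S : Finset (Fin n), (φ S.card * ψ S.card) * cubeFourier f S * walsh S x
  refine Finset.sum_congr rfl fun S _ => ?_
  rw [fourier_mult ψ f S]
  ring

def Band {n : ℕ} (k : ℕ) (f : (Fin n → Bool) → ℝ) : Prop :=
  cubeFourier f ∅ = 0 ∧ ∀ S : Finset (Fin n), k < S.card → cubeFourier f S = 0

lemma Band.mult {n k : ℕ} {f : (Fin n → Bool) → ℝ} (h : Band k f) (φ : ℕ → ℝ) :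
    Band k (mult φ f) := by
  refine ⟨?_, fun S hS => ?_⟩
  · rw [fourier_mult, h.1, mul_zero]
  · rw [fourier_mult, h.2 S hS, mul_zero]

lemma Band.congr {n k : ℕ} {f : (Fin n → Bool) → ℝ} (h : Band k f) {φ ψ : ℕ → ℝ}
    (hh : ∀ m, 1 ≤ m → m ≤ k → φ m = ψ m) : _root_.mult φ f = _root_.mult ψ f := by
  funext x
  unfold _root_.mult
  refine Finset.sum_congr rfl fun S _ => ?_
  by_cases h0 : S = ∅
  · subst h0; rw [h.1]; simp
  by_cases h1 : k < S.card
  · rw [h.2 S h1]; simp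
  rw [hh _ (Finset.card_pos.mpr (Finset.nonempty_iff_ne_empty.mpr h0)) (not_lt.mp h1)]

lemma mult_add {n : ℕ} (φ ψ : ℕ → ℝ) (f : (Fin n → Bool) → ℝ) (x) :
    mult φ f x + mult ψ f x = mult (fun m => φ m + ψ m) f x := by
  unfold mult
  rw [← Finset.sum_add_distrib]
  refine Finset.sum_congr rfl fun S _ => by ring

lemma mult_smul {n : ℕ} (a : ℝ) (φ : ℕ → ℝ) (f : (Fin n → Bool) → ℝ) (x) :
    a * mult φ f x = mult (fun m => a * φ m) f x := by
  unfold mult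
  rw [Finset.mul_sum]
  refine Finset.sum_congr rfl fun S _ => by ring

lemma mult_sum {n : ℕ} {ι : Type*} (s : Finset ι) (φ : ι → ℕ → ℝ) (f : (Fin n → Bool) → ℝ) (x) :
    ∑ i ∈ s, mult (φ i) f x = mult (fun m => ∑ i ∈ s, φ i m) f x := by
  unfold mult
  rw [Finset.sum_comm]
  simp_rw [Finset.sum_mul]

/-- pairing of `mult φ u` with the sign of `u`. -/
def L {n : ℕ} (u : (Fin n → Bool) → ℝ) (φ : ℕ → ℝ) : ℝ :=
  cubeE fun x => mult φ u x * Real.sign (u x)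

lemma mul_sign_self (r : ℝ) : r * Real.sign r = |r| := by
  rcases lt_trichotomy r 0 with h | h | h
  · rw [Real.sign_of_neg h, abs_of_neg h]; ring
  · simp [h]
  · rw [Real.sign_of_pos h, abs_of_pos h]; ring

lemma mul_sign_le (a r : ℝ) : a * Real.sign r ≤ |a| := by
  rcases lt_trichotomy r 0 with h | h | h
  · rw [Real.sign_of_neg h]; linarith [neg_abs_le a]
  · simp [h]
  · rw [Real.sign_of_pos h]; linarith [le_abs_self a]

lemma L_one {n : ℕ} (u : (Fin n → Bool) → ℝ) : L u (fun _ => 1) = N1 u := by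
  simp [L, mult_one, mul_sign_self, N1]

lemma L_le {n : ℕ} (u : (Fin n → Bool) → ℝ) (φ : ℕ → ℝ) : L u φ ≤ N1 (mult φ u) :=
  cubeE_mono fun x => mul_sign_le _ _

lemma L_expand {n : ℕ} (u : (Fin n → Bool) → ℝ) (φ : ℕ → ℝ) :
    L u φ = ∑ S : Finset (Fin n),
      φ S.card * (cubeFourier u S * cubeE fun x => walsh S x * Real.sign (u x)) := by
  unfold L mult
  simp_rw [Finset.sum_mul, mul_assoc]
  rw [cubeE_sum]
  simp_rw [cubeE_mul]

lemma L_add {n : ℕ} (u : (Fin n → Bool) → ℝ) (φ ψ : ℕ → ℝ) :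
    L u (fun m => φ m + ψ m) = L u φ + L u ψ := by
  simp_rw [L_expand, add_mul, Finset.sum_add_distrib]

lemma L_smul {n : ℕ} (u : (Fin n → Bool) → ℝ) (a : ℝ) (φ : ℕ → ℝ) :
    L u (fun m => a * φ m) = a * L u φ := by
  simp_rw [L_expand, mul_assoc, ← Finset.mul_sum]

/-- dissipativity gives resolvent bound -/
lemma resolvent_bound {n : ℕ} (φ : ℕ → ℝ) (h c : ℝ) (hh : 0 ≤ h) (u : (Fin n → Bool) → ℝ)
    (hd : c * N1 u ≤ L u φ) :
    (1 + h * c) * N1 u ≤ N1 (mult (fun m => 1 + h * φ m) u) := by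
  refine le_trans ?_ (L_le u _)
  rw [L_add u (fun _ => 1), L_smul, L_one]
  nlinarith

def cflip {n : ℕ} (j : Fin n) (x : Fin n → Bool) : Fin n → Bool := Function.update x j (!x j)

lemma cflip_cflip {n : ℕ} (j : Fin n) : Function.Involutive (cflip j) := by
  intro x
  simp [cflip]

lemma walsh_flip {n : ℕ} (j : Fin n) (S : Finset (Fin n)) (x : Fin n → Bool) :
    walsh S (cflip j x) = (if j ∈ S then -1 else 1) * walsh S x := by
  have h1 : ∀ i, sg (cflip j x i) = (if i = j then -1 else 1) * sg (x i) := by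
    intro i
    by_cases hi : i = j
    · subst hi; cases hx : x i <;> simp [cflip, sg, hx]
    · simp [cflip, hi]
  change ∏ i ∈ S, sg (cflip j x i) = _ * ∏ i ∈ S, sg (x i)
  simp_rw [h1, Finset.prod_mul_distrib]
  simp [Finset.prod_ite_eq']

lemma cubeE_flip {n : ℕ} (j : Fin n) (F : (Fin n → Bool) → ℝ) :
    cubeE (fun x => F (cflip j x)) = cubeE F := by
  unfold cubeE
  congr 1
  exact Equiv.sum_comp (cflip_cflip j).toPerm F

lemma mult_card {n : ℕ} (u : (Fin n → Bool) → ℝ) (x : Fin n → Bool) :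
    mult (fun m => (m : ℝ)) u x = ∑ j, (u x - u (cflip j x)) / 2 := by
  have key : ∀ j, (u x - u (cflip j x)) / 2 =
      ∑ S : Finset (Fin n), (if j ∈ S then (1:ℝ) else 0) * (cubeFourier u S * walsh S x) := by
    intro j
    have e : ∀ y, u y = ∑ S : Finset (Fin n), 1 * cubeFourier u S * walsh S y :=
      fun y => (congrFun (mult_one u) y).symm
    rw [e x, e (cflip j x)]
    rw [← Finset.sum_sub_distrib, Finset.sum_div]
    refine Finset.sum_congr rfl fun S _ => ?_
    rw [walsh_flip]
    split_ifs <;> ring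
  simp_rw [key]
  rw [Finset.sum_comm]
  simp_rw [← Finset.sum_mul]
  unfold mult
  refine Finset.sum_congr rfl fun S _ => ?_
  simp [mul_assoc]

lemma L_card_nonneg {n : ℕ} (u : (Fin n → Bool) → ℝ) : 0 ≤ L u (fun m => (m : ℝ)) := by
  unfold L
  simp_rw [mult_card, Finset.sum_mul]
  rw [cubeE_sum]
  refine Finset.sum_nonneg fun j _ => ?_
  have : ∀ x, 1 / 2 * (|u x| - |u (cflip j x)|) ≤ (u x - u (cflip j x)) / 2 * Real.sign (u x) := by
    intro x
    have h1 := mul_sign_self (u x)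
    have h2 := mul_sign_le (u (cflip j x)) (u x)
    linarith
  refine le_trans ?_ (cubeE_mono this)
  rw [cubeE_mul, cubeE_sub, cubeE_flip j (fun x => |u x|)]
  simp

lemma res_contr {n : ℕ} (t : ℝ) (ht : 0 < t) (f : (Fin n → Bool) → ℝ) :
    N1 (mult (fun m => t / (t + m)) f) ≤ N1 f := by
  have h := resolvent_bound (fun m => (m : ℝ)) t⁻¹ 0 (by positivity)
    (mult (fun m => t / (t + m)) f) (by simpa using L_card_nonneg _)
  rw [mult_mult] at h
  have h2 : (fun m : ℕ => (1 + t⁻¹ * (m:ℝ)) * (t / (t + m))) = fun _ => 1 := by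
    funext m
    have : t + (m:ℝ) ≠ 0 := by positivity
    field_simp
  rw [h2, mult_one] at h
  simpa using h

lemma res_pow_contr {n : ℕ} (i : ℕ) (f : (Fin n → Bool) → ℝ) :
    N1 (mult (fun m => (1 / (1 + (m:ℝ))) ^ i) f) ≤ N1 f := by
  induction i with
  | zero => simp [mult_one]
  | succ i ih =>
    have := res_contr 1 one_pos (mult (fun m => (1 / (1 + (m:ℝ))) ^ i) f)
    rw [mult_mult] at this
    simp_rw [pow_succ']
    exact this.trans ih

lemma lap_inv (k : ℕ) : ∃ Q : ℝ, 0 < Q ∧ ∀ (n : ℕ) (f : (Fin n → Bool) → ℝ), Band k f →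
    N1 (mult (fun m => 1 / (m:ℝ)) f) ≤ Q * N1 f := by
  let v : ℕ → ℝ := fun m => 1 / (1 + (m:ℝ))
  let q := Lagrange.interpolate (Finset.Icc 1 k) v (fun m => 1 / (m:ℝ))
  have hv : Set.InjOn v (Finset.Icc 1 k) := by
    intro a _ b _ hab
    simp only [v, one_div, inv_inj] at hab
    exact_mod_cast add_left_cancel hab
  have hq : ∀ m, 1 ≤ m → m ≤ k →
      1 / (m:ℝ) = ∑ i ∈ Finset.range (q.natDegree + 1), q.coeff i * (1 / (1 + (m:ℝ))) ^ i := by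
    intro m h1 h2
    rw [← Polynomial.eval_eq_sum_range]
    exact (Lagrange.eval_interpolate_at_node (fun m : ℕ => 1 / (m:ℝ)) hv
      (Finset.mem_Icc.mpr ⟨h1, h2⟩)).symm
  refine ⟨1 + ∑ i ∈ Finset.range (q.natDegree + 1), |q.coeff i|, by positivity, ?_⟩
  intro n f hf
  rw [hf.congr hq]
  have : mult (fun m => ∑ i ∈ Finset.range (q.natDegree + 1), q.coeff i * (1 / (1 + (m:ℝ))) ^ i) f
      = fun x => ∑ i ∈ Finset.range (q.natDegree + 1),
        q.coeff i * mult (fun m => (1 / (1 + (m:ℝ))) ^ i) f x := by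
    funext x
    simp_rw [mult_smul]
    rw [mult_sum]
  rw [this]
  refine (N1_sum_le _ _).trans ?_
  simp_rw [N1_smul]
  rw [add_mul, Finset.sum_mul]
  have h0 := N1_nonneg f
  have : ∑ i ∈ Finset.range (q.natDegree + 1),
      |q.coeff i| * N1 (mult (fun m => (1 / (1 + (m:ℝ))) ^ i) f) ≤
      ∑ i ∈ Finset.range (q.natDegree + 1), |q.coeff i| * N1 f := by
    gcongr
    exact res_pow_contr _ _
  linarith

lemma L_res_nonneg {n : ℕ} (t : ℝ) (ht : 0 < t) (u : (Fin n → Bool) → ℝ) :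
    N1 u - N1 (mult (fun m => t / (t + m)) u) ≤ L u (fun m => (m:ℝ) / (t + m)) := by
  have h := L_add u (fun m => t / (t + m)) (fun m => (m:ℝ) / (t + m))
  have h2 : (fun m : ℕ => t / (t + m) + (m:ℝ) / (t + m)) = fun _ => 1 := by
    funext m
    have : t + (m:ℝ) ≠ 0 := by positivity
    field_simp
  rw [h2, L_one] at h
  have := L_le u (fun m => t / (t + m))
  linarith

lemma small_t (k : ℕ) : ∃ t₀ : ℝ, 0 < t₀ ∧ ∀ (n : ℕ) (u : (Fin n → Bool) → ℝ), Band k u →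
    ∀ t, 0 < t → t ≤ t₀ → 1 / 2 * N1 u ≤ L u (fun m => (m:ℝ) / (t + m)) := by
  obtain ⟨Q, hQ, hb⟩ := lap_inv k
  refine ⟨1 / (4 * Q), by positivity, fun n u hu t ht ht0 => ?_⟩
  refine le_trans ?_ (L_res_nonneg t ht u)
  set w := mult (fun m => t / (t + m)) u with hw
  have h1 : N1 w ≤ N1 u := res_contr t ht u
  have hd : Band k (mult (fun m => 1 - t / (t + m)) u) := hu.mult _
  have h2 : N1 (mult (fun m => 1 - t / (t + m)) u) ≤ N1 u + N1 w := by
    have : mult (fun m => 1 - t / (t + m)) u = fun x => u x - w x := by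
      funext x
      have := mult_add (fun m => 1 - t / (t + m)) (fun m => t / (t + m)) u x
      simp only [sub_add_cancel, mult_one] at this
      rw [hw]; linarith
    rw [this]
    exact N1_sub_le _ _
  have h3 : w = fun x => t * mult (fun m => 1 / (m:ℝ)) (mult (fun m => 1 - t / (t + m)) u) x := by
    funext x
    rw [mult_mult, mult_smul, hw]
    refine congrFun (hu.congr fun m hm _ => ?_) x
    have h1 : t + (m:ℝ) ≠ 0 := by positivity
    have h2 : (m:ℝ) ≠ 0 := by positivity
    field_simp
    ring
  have h4 : N1 w ≤ t * (Q * (N1 u + N1 w)) := by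
    conv_lhs => rw [h3]
    rw [N1_smul, abs_of_pos ht]
    have := hb n _ hd
    gcongr
    exact this.trans (by gcongr)
  have h5 : t * Q ≤ 1 / 4 := by
    rw [le_div_iff₀ (by positivity)] at ht0
    linarith
  have h6 := N1_nonneg u
  nlinarith

open Real in
lemma dissip (γ : ℝ) (hγ : γ ∈ Set.Ioo (0:ℝ) 1) (k : ℕ) : ∃ c : ℝ, 0 < c ∧
    ∀ (n : ℕ) (u : (Fin n → Bool) → ℝ), Band k u →
      c * N1 u ≤ L u (fun m => (m:ℝ) ^ γ) := by
  obtain ⟨t₀, ht₀, hs⟩ := small_t k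
  set I := ∫ t in Set.Ioi 0, rpowIntegrand₀₁ γ t 1 with hI
  have hIpos : 0 < I := integral_rpowIntegrand₀₁_one_pos hγ
  refine ⟨I⁻¹ * (t₀ * (t₀ ^ (γ - 1) * (1 / 2))), by positivity, fun n u hu => ?_⟩
  have hN := N1_nonneg u
  have hint : ∀ m : ℕ, IntegrableOn (fun t => rpowIntegrand₀₁ γ t m) (Set.Ioi 0) :=
    fun m => integrableOn_rpowIntegrand₀₁_Ioi hγ (Nat.cast_nonneg m)
  have hLeq : L u (fun m => (m:ℝ) ^ γ) =
      I⁻¹ * ∫ t in Set.Ioi 0, L u (fun m => rpowIntegrand₀₁ γ t m) := by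
    simp_rw [L_expand]
    rw [integral_finset_sum]
    · rw [Finset.mul_sum]
      refine Finset.sum_congr rfl fun S _ => ?_
      rw [integral_mul_const, rpow_eq_const_mul_integral hγ (Nat.cast_nonneg _), mul_assoc]
    · intro S _
      exact (hint _).mul_const _
  have hLint : IntegrableOn (fun t => L u (fun m => rpowIntegrand₀₁ γ t m)) (Set.Ioi 0) := by
    simp_rw [L_expand]
    exact integrable_finset_sum _ fun S _ => (hint _).mul_const _
  have hval : ∀ t, 0 < t → L u (fun m => rpowIntegrand₀₁ γ t m) =
      t ^ (γ - 1) * L u (fun m => (m:ℝ) / (t + m)) := by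
    intro t ht
    rw [← L_smul]
    congr 1
    funext m
    rw [rpowIntegrand₀₁_eq_pow_div hγ ht.le (Nat.cast_nonneg _), mul_div_assoc]
  have hnn : ∀ t, 0 < t → 0 ≤ L u (fun m => rpowIntegrand₀₁ γ t m) := by
    intro t ht
    rw [hval t ht]
    have h1 := L_res_nonneg t ht u
    have h2 := res_contr t ht u
    have : 0 ≤ L u (fun m => (m:ℝ) / (t + m)) := by linarith
    positivity
  rw [hLeq, mul_assoc]
  gcongr
  calc t₀ * (t₀ ^ (γ - 1) * (1 / 2)) * N1 u
      = ∫ t in Set.Ioc 0 t₀, t₀ ^ (γ - 1) * (1 / 2 * N1 u) := by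
        rw [setIntegral_const]
        simp [ht₀.le]
        ring
    _ ≤ ∫ t in Set.Ioc 0 t₀, L u (fun m => rpowIntegrand₀₁ γ t m) := by
        refine setIntegral_mono_on ?_ (hLint.mono_set Set.Ioc_subset_Ioi_self)
          measurableSet_Ioc ?_
        · exact integrableOn_const (by simp)
        · intro t ht
          rw [hval t ht.1]
          have h1 := hs n u hu t ht.1 ht.2
          have h2 : t₀ ^ (γ - 1) ≤ t ^ (γ - 1) :=
            Real.rpow_le_rpow_of_nonpos ht.1 ht.2 (by linarith [hγ.2])
          have h3 : 0 ≤ t ^ (γ - 1) := Real.rpow_nonneg ht.1.le _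
          gcongr
    _ ≤ _ := by
        refine setIntegral_mono_set hLint ?_ ?_
        · filter_upwards [ae_restrict_mem measurableSet_Ioi] with t ht
          exact hnn t ht
        · exact Filter.Eventually.of_forall fun t ht => ht.1

lemma iter {n k : ℕ} (φ : ℕ → ℝ) (hφ : ∀ m, 0 ≤ φ m) (c h : ℝ) (hc : 0 < c) (hh : 0 ≤ h)
    (hd : ∀ u : (Fin n → Bool) → ℝ, Band k u → c * N1 u ≤ L u φ)
    (f : (Fin n → Bool) → ℝ) (hf : Band k f) (i : ℕ) :
    (1 + h * c) ^ i * N1 (mult (fun m => ((1 + h * φ m) ^ i)⁻¹) f) ≤ N1 f := by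
  induction i with
  | zero => simp [mult_one]
  | succ i ih =>
    refine le_trans ?_ ih
    have := resolvent_bound φ h c hh (mult (fun m => ((1 + h * φ m) ^ (i+1))⁻¹) f)
      (hd _ (hf.mult _))
    rw [mult_mult] at this
    have h2 : (fun m => (1 + h * φ m) * ((1 + h * φ m) ^ (i+1))⁻¹) =
        fun m => ((1 + h * φ m) ^ i)⁻¹ := by
      funext m
      have h1 : 1 + h * φ m ≠ 0 := by have := hφ m; positivity
      field_simp
      ring
    rw [h2] at this
    rw [pow_succ, mul_assoc]
    gcongr

/-- `L¹` spectral gap for the fractional heat semigroup for band-limited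
functions: for `0 < γ < 1` and `k ≥ 1` there is `c > 0` (depending only on `γ`
and `k`) such that for every `n`, every `f : C_n → ℝ` with `f̂(∅) = 0` and
`f̂(S) = 0` for `|S| > k`, and every `t ≥ 0`,
`‖e^{tΔ_γ} f‖₁ ≤ e^{-ct} ‖f‖₁`. -/
theorem stmt7 (γ : ℝ) (hγ0 : 0 < γ) (hγ1 : γ < 1) (k : ℕ) (hk : 1 ≤ k) :
    ∃ c : ℝ, 0 < c ∧
      ∀ (n : ℕ) (f : (Fin n → Bool) → ℝ),
        cubeFourier f ∅ = 0 →
        (∀ S : Finset (Fin n), k < S.card → cubeFourier f S = 0) →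
        ∀ t : ℝ, 0 ≤ t →
          pNorm 1 (heatFrac γ t f) ≤ Real.exp (-c * t) * pNorm 1 f := by
  obtain ⟨c, hc, hd⟩ := dissip γ ⟨hγ0, hγ1⟩ k
  refine ⟨c, hc, fun n f h0 h1 t ht => ?_⟩
  have hf : Band k f := ⟨h0, h1⟩
  rw [pNorm_one, pNorm_one]
  have hlim : ∀ a : ℝ, Filter.Tendsto (fun i : ℕ => (1 + t / i * a) ^ i) Filter.atTop
      (nhds (Real.exp (t * a))) := by
    intro a
    have := Real.tendsto_one_add_div_pow_exp (t * a)
    refine this.congr fun i => ?_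
    rw [div_mul_eq_mul_div]
  have hpt : ∀ x, Filter.Tendsto
      (fun i : ℕ => mult (fun m => ((1 + t / i * (m:ℝ) ^ γ) ^ i)⁻¹) f x) Filter.atTop
      (nhds (heatFrac γ t f x)) := by
    intro x
    unfold mult heatFrac
    refine tendsto_finset_sum _ fun S _ => ?_
    refine Filter.Tendsto.mul_const _ (Filter.Tendsto.mul_const _ ?_)
    rw [neg_mul, Real.exp_neg]
    exact (hlim _).inv₀ (Real.exp_ne_zero _)
  have hN : Filter.Tendsto
      (fun i : ℕ => (1 + t / i * c) ^ i * N1 (mult (fun m => ((1 + t / i * (m:ℝ) ^ γ) ^ i)⁻¹) f))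
      Filter.atTop (nhds (Real.exp (t * c) * N1 (heatFrac γ t f))) := by
    refine (hlim c).mul ?_
    unfold N1 cubeE
    exact (tendsto_finset_sum _ fun x _ => (hpt x).abs).div_const _
  have hle := le_of_tendsto' hN fun i : ℕ =>
    iter (fun m => (m:ℝ) ^ γ) (fun m => by positivity) c (t / i) hc (by positivity) (hd n) f hf i
  rw [neg_mul, Real.exp_neg, mul_comm c t]
  rw [inv_mul_eq_div, le_div_iff₀ (Real.exp_pos _)]
  linarith
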